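/- Let R be a commutative ring, 𝔗 a half centered torsion theory over R, 𝔞 a finitely generated ideal of R, and M a weakly Laskerian R-module. Then 𝔗-cgrade_R(𝔞,M) = 𝔗-Kgrade_R(𝔞,M). -/

import Mathlib

open CategoryTheory

universe u

noncomputable section

/-- A torsion theory over `R`: a class of `R`-modules closed under isomorphism, submodules,
quotient modules, extensions, and directed colimits (formulated as closure under directed
unions of submodules). -/
structure IsTorsionTheory (R : Type u) [CommRing R] (T : Set (ModuleCat.{u} R)) : Prop where
  mem_of_iso : ∀ {N N' : ModuleCat.{u} R}, (N ≅ N') → N ∈ T → N' ∈ T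
  submodule_mem : ∀ {N : ModuleCat.{u} R}, N ∈ T → ∀ S : Submodule R N,
    ModuleCat.of R S ∈ T
  quotient_mem : ∀ {N : ModuleCat.{u} R}, N ∈ T → ∀ S : Submodule R N,
    ModuleCat.of R (N ⧸ S) ∈ T
  ext_mem : ∀ {N : ModuleCat.{u} R} (S : Submodule R N),
    ModuleCat.of R S ∈ T → ModuleCat.of R (N ⧸ S) ∈ T → N ∈ T
  directed_mem : ∀ {N : ModuleCat.{u} R} {ι : Type u} [Nonempty ι] (S : ι → Submodule R N),
    Directed (· ≤ ·) S → (∀ i, ModuleCat.of R (S i) ∈ T) → iSup S = ⊤ → N ∈ T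

variable {R : Type u} [CommRing R]

/-- The "outgoing" differential of the Koszul cocomplex `Hom_R(K_•(x), M)`, whose degree `i`
component is indexed by the `i`-element subsets of `{1, …, r}`. -/
def koszulDiff {r : ℕ} (x : Fin r → R) (M : Type u) [AddCommGroup M] [Module R M] (i : ℕ) :
    ({s : Finset (Fin r) // s.card = i} → M) →ₗ[R]
      ({s : Finset (Fin r) // s.card = i + 1} → M) where
  toFun φ t := ∑ j ∈ t.1.attach,
    ((-1 : R) ^ (t.1.filter (fun k => k < j.1)).card * x j.1) •
      φ ⟨t.1.erase j.1, by simp [Finset.card_erase_of_mem j.2, t.2]⟩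
  map_add' φ ψ := by
    funext t
    simp [Finset.sum_add_distrib, smul_add]
  map_smul' c φ := by
    funext t
    simp [Finset.smul_sum, smul_comm c]

/-- The "incoming" differential of the Koszul cocomplex in degree `i`
(its source is trivial when `i = 0`). -/
def koszulDiffIn {r : ℕ} (x : Fin r → R) (M : Type u) [AddCommGroup M] [Module R M] (i : ℕ) :
    ({s : Finset (Fin r) // s.card + 1 = i} → M) →ₗ[R]
      ({s : Finset (Fin r) // s.card = i} → M) where
  toFun φ t := ∑ j ∈ t.1.attach,
    ((-1 : R) ^ (t.1.filter (fun k => k < j.1)).card * x j.1) •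
      φ ⟨t.1.erase j.1, by rw [Finset.card_erase_add_one j.2]; exact t.2⟩
  map_add' φ ψ := by
    funext t
    simp [Finset.sum_add_distrib, smul_add]
  map_smul' c φ := by
    funext t
    simp [Finset.smul_sum, smul_comm c]

/-- The `i`-th Koszul cohomology `H^i(x; M)` of `M` with respect to `x₁, …, x_r`, i.e. the
`i`-th cohomology of the cocomplex `Hom_R(K_•(x), M)`. -/
abbrev koszulCohomology {r : ℕ} (x : Fin r → R) (M : Type u) [AddCommGroup M] [Module R M]
    (i : ℕ) : Type u :=
  ↥(LinearMap.ker (koszulDiff x M i)) ⧸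
    (Submodule.comap (LinearMap.ker (koszulDiff x M i)).subtype
      (LinearMap.range (koszulDiffIn x M i)))

/-- The `𝔗`-Koszul grade of the ideal `(x₁, …, x_r)` on `M`: the infimum of the set of `i`
such that `H^i(x; M) ∉ 𝔗` (with `inf ∅ = +∞`). -/
def TKgrade (T : Set (ModuleCat.{u} R)) {r : ℕ} (x : Fin r → R) (M : Type u)
    [AddCommGroup M] [Module R M] : ℕ∞ :=
  sInf ((↑· : ℕ → ℕ∞) '' {i | ModuleCat.of R (koszulCohomology x M i) ∉ T})

/-- `x₁, …, x_n` is a weak `M`-regular sequence with respect to `𝔗` if the module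
`((x₁,…,x_{i-1})M :_M x_i) / (x₁,…,x_{i-1})M` belongs to `𝔗` for all `i = 1, …, n`. -/
def IsWeakRegularSeqWrt (T : Set (ModuleCat.{u} R)) {n : ℕ} (x : Fin n → R) (M : Type u)
    [AddCommGroup M] [Module R M] : Prop :=
  ∀ i : Fin n,
    ModuleCat.of R
      ↥(Submodule.map (Ideal.span (x '' {j | j < i}) • (⊤ : Submodule R M)).mkQ
        (Submodule.comap (LinearMap.lsmul R M (x i))
          (Ideal.span (x '' {j | j < i}) • (⊤ : Submodule R M)))) ∈ T

/-- The `𝔗`-classical grade of `𝔞` on `M`: the supremum of the lengths of weak `M`-regular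
sequences with respect to `𝔗` consisting of elements of `𝔞`. -/
def Tcgrade (T : Set (ModuleCat.{u} R)) (a : Ideal R) (M : Type u)
    [AddCommGroup M] [Module R M] : ℕ∞ :=
  sSup ((↑· : ℕ → ℕ∞) ''
    {n | ∃ x : Fin n → R, (∀ i, x i ∈ a) ∧ IsWeakRegularSeqWrt T x M})

/-- A torsion theory `𝔗` is half centered if every module `N` such that `R/𝔭 ∈ 𝔗` for all
primes `𝔭` in the support of `N` itself belongs to `𝔗`. -/
def IsHalfCentered {R : Type u} [CommRing R] (T : Set (ModuleCat.{u} R)) : Prop :=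
  ∀ N : ModuleCat.{u} R,
    (∀ p ∈ Module.support R N, ModuleCat.of R (R ⧸ p.asIdeal) ∈ T) → N ∈ T

/-- The weakly associated primes of `M`: the primes that are minimal over the annihilator
`(0 :_R m)` of some `m ∈ M`. -/
def weakAssocPrimes (R : Type u) [CommRing R] (M : Type u) [AddCommGroup M] [Module R M] :
    Set (Ideal R) :=
  { p | ∃ m : M, p ∈ (Ideal.torsionOf R M m).minimalPrimes }

/-- An `R`-module `M` is weakly Laskerian if every quotient of `M` has only finitely many
weakly associated prime ideals. -/
def IsWeaklyLaskerian (R : Type u) [CommRing R] (M : Type u) [AddCommGroup M]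
    [Module R M] : Prop :=
  ∀ N : Submodule R M, (weakAssocPrimes R (M ⧸ N)).Finite

/-- The sign attached to the position of `j` relative to the subset `t`. -/
def koszulSign (R : Type u) [CommRing R] {r : ℕ} (t : Finset (Fin r)) (j : Fin r) : R :=
  (-1) ^ (t.filter (fun k => k < j)).card

lemma koszulSign_mul_self {r : ℕ} (t : Finset (Fin r)) (j : Fin r) :
    koszulSign R t j * koszulSign R t j = 1 := by
  rw [koszulSign, ← mul_pow]
  simp

lemma koszulSign_insert {r : ℕ} {t : Finset (Fin r)} {k : Fin r} (hk : k ∉ t) (j : Fin r) :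
    koszulSign R (insert k t) j = (if k < j then -1 else 1) * koszulSign R t j := by
  unfold koszulSign
  rw [Finset.filter_insert]
  split_ifs
  · rw [Finset.card_insert_of_notMem (by simp [hk]), pow_succ']
  · simp

lemma koszulSign_erase {r : ℕ} {t : Finset (Fin r)} {k : Fin r} (hk : k ∈ t) (j : Fin r) :
    koszulSign R t j = (if k < j then -1 else 1) * koszulSign R (t.erase k) j := by
  conv_lhs => rw [← Finset.insert_erase hk]
  exact koszulSign_insert (Finset.notMem_erase k t) j

/-- The Koszul differential on cochains of all degrees at once. -/
def koszulTotalDiff {r : ℕ} (y : Fin r → R) (M : Type u) [AddCommGroup M] [Module R M] :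
    (Finset (Fin r) → M) →ₗ[R] (Finset (Fin r) → M) where
  toFun φ t := ∑ j ∈ t, (koszulSign R t j * y j) • φ (t.erase j)
  map_add' φ ψ := by
    funext t
    simp [Finset.sum_add_distrib, smul_add]
  map_smul' c φ := by
    funext t
    simp [Finset.smul_sum, smul_comm c]

section Koszul

variable {r : ℕ} (y : Fin r → R) {M : Type u} [AddCommGroup M] [Module R M]

lemma koszulTotalDiff_apply (φ : Finset (Fin r) → M) (t : Finset (Fin r)) :
    koszulTotalDiff y M φ t = ∑ j ∈ t, (koszulSign R t j * y j) • φ (t.erase j) := rfl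

lemma koszulTotalDiff_comp_self (φ : Finset (Fin r) → M) (t : Finset (Fin r)) :
    koszulTotalDiff y M (koszulTotalDiff y M φ) t = 0 := by
  simp only [koszulTotalDiff_apply, Finset.smul_sum, smul_smul]
  rw [Finset.sum_sigma']
  refine Finset.sum_involution (fun p _ => ⟨p.2, p.1⟩) ?_ ?_ ?_ ?_
  · rintro ⟨j, k⟩ h
    simp only [Finset.mem_sigma, Finset.mem_erase] at h
    obtain ⟨hj, hkj, hk⟩ := h
    dsimp only
    rw [Finset.erase_right_comm, ← add_smul]
    convert zero_smul R _
    rw [koszulSign_erase hk j, koszulSign_erase hj k]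
    rcases lt_or_gt_of_ne hkj with h | h
    · rw [if_pos h, if_neg h.not_gt]; ring
    · rw [if_pos h, if_neg h.not_gt]; ring
  · rintro ⟨j, k⟩ h _ heq
    simp only [Finset.mem_sigma, Finset.mem_erase] at h
    simp only [Sigma.mk.injEq] at heq
    exact h.2.1 heq.1
  · rintro ⟨j, k⟩ h
    simp only [Finset.mem_sigma, Finset.mem_erase] at h ⊢
    exact ⟨h.2.2, h.2.1.symm, h.1⟩
  · rintro ⟨j, k⟩ _
    rfl

/-- The contraction of a Koszul cochain along the `j`-th basis vector. -/
def koszulContraction (j : Fin r) (φ : Finset (Fin r) → M) : Finset (Fin r) → M :=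
  fun t => if j ∈ t then 0 else koszulSign R t j • φ (insert j t)

lemma koszulTotalDiff_contraction_add (j : Fin r) (φ : Finset (Fin r) → M)
    (t : Finset (Fin r)) :
    koszulTotalDiff y M (koszulContraction (R := R) j φ) t +
      koszulContraction (R := R) j (koszulTotalDiff y M φ) t = y j • φ t := by
  by_cases hj : j ∈ t
  · simp only [koszulTotalDiff_apply, koszulContraction, if_pos hj, add_zero]
    rw [Finset.sum_eq_single_of_mem j hj]
    · rw [if_neg (Finset.notMem_erase j t), Finset.insert_erase hj, smul_smul,
        koszulSign_erase hj j, if_neg (lt_irrefl j)]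
      congr 1
      linear_combination y j * koszulSign_mul_self (R := R) (t.erase j) j
    · intro k hk hkj
      rw [if_pos (Finset.mem_erase.2 ⟨hkj.symm, hj⟩), smul_zero]
  · simp only [koszulTotalDiff_apply, koszulContraction, if_neg hj]
    rw [Finset.sum_insert hj, Finset.erase_insert hj, smul_add, Finset.smul_sum, smul_smul,
      koszulSign_insert hj j, if_neg (lt_irrefl j), add_left_comm, ← Finset.sum_add_distrib]
    have hsum : ∀ k ∈ t, (koszulSign R t k * y k) •
        (if j ∈ t.erase k then (0 : M) else
          koszulSign R (t.erase k) j • φ (insert j (t.erase k))) +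
        koszulSign R t j • (koszulSign R (insert j t) k * y k) • φ ((insert j t).erase k) = 0 := by
      intro k hk
      have hkj : k ≠ j := fun h => hj (h ▸ hk)
      rw [if_neg (fun h => hj (Finset.mem_of_mem_erase h)),
        Finset.erase_insert_of_ne hkj.symm, smul_smul, smul_smul, ← add_smul]
      convert zero_smul R _
      rw [koszulSign_insert hj k, koszulSign_erase hk j]
      rcases lt_or_gt_of_ne hkj with h | h
      · rw [if_pos h, if_neg h.not_gt]; ring
      · rw [if_pos h, if_neg h.not_gt]; ring
    rw [Finset.sum_eq_zero hsum, add_zero]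
    congr 1
    linear_combination y j * koszulSign_mul_self (R := R) t j

lemma koszulTotalDiff_mem {U : Submodule R M} {i : ℕ} {φ : Finset (Fin r) → M}
    (hφ : ∀ t, t.card = i → φ t ∈ U) (t : Finset (Fin r)) (ht : t.card = i + 1) :
    koszulTotalDiff y M φ t ∈ U := by
  refine U.sum_mem fun j hj => U.smul_mem _ (hφ _ ?_)
  rw [Finset.card_erase_of_mem hj, ht, Nat.add_sub_cancel]

/-- Elements of the ideal `(y₁, …, y_r)` act as zero on the Koszul cohomology of `M ⧸ U`. -/
lemma exists_smul_sub_koszulTotalDiff_mem {x : R} (hx : x ∈ Ideal.span (Set.range y))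
    (U : Submodule R M) (i : ℕ) (φ : Finset (Fin r) → M)
    (hφ : ∀ t, t.card = i + 1 → koszulTotalDiff y M φ t ∈ U) :
    ∃ ψ : Finset (Fin r) → M, ∀ t, t.card = i → x • φ t - koszulTotalDiff y M ψ t ∈ U := by
  induction hx using Submodule.span_induction with
  | mem x hx =>
    obtain ⟨j, rfl⟩ := hx
    refine ⟨koszulContraction (R := R) j φ, fun t ht => ?_⟩
    rw [← koszulTotalDiff_contraction_add y j φ t, add_sub_cancel_left, koszulContraction]
    split_ifs with hj
    · exact U.zero_mem
    · exact U.smul_mem _ (hφ _ (by rw [Finset.card_insert_of_notMem hj, ht]))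
  | zero => exact ⟨0, fun t _ => by simp⟩
  | add x x' _ _ h h' =>
    obtain ⟨ψ, hψ⟩ := h
    obtain ⟨ψ', hψ'⟩ := h'
    refine ⟨ψ + ψ', fun t ht => ?_⟩
    convert U.add_mem (hψ t ht) (hψ' t ht) using 1
    rw [map_add, Pi.add_apply]
    module
  | smul c x _ h =>
    obtain ⟨ψ, hψ⟩ := h
    refine ⟨c • ψ, fun t ht => ?_⟩
    convert U.smul_mem c (hψ t ht) using 1
    rw [map_smul, Pi.smul_apply]
    module

/-- The Koszul cohomology of `M ⧸ U` in degrees below `n` vanishes after localizing at `p`,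
expressed through cochains with values in `M`. -/
def KoszulVanishesBelow (p : Ideal R) (U : Submodule R M) (n : ℕ) : Prop :=
  ∀ i < n, ∀ φ : Finset (Fin r) → M,
    (∀ t, t.card = i + 1 → koszulTotalDiff y M φ t ∈ U) →
    ∃ s ∉ p, ∃ ψ : Finset (Fin r) → M,
      ∀ t, t.card = i → s • φ t - koszulTotalDiff y M ψ t ∈ U

/-- Multiplication by `x` on `M ⧸ U` is injective after localizing at `p`. -/
def IsRegularModAt (p : Ideal R) (U : Submodule R M) (x : R) : Prop :=
  ∀ m : M, x • m ∈ U → ∃ s ∉ p, s • m ∈ U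

variable {y}

/-- A single multiplier outside `p` can be chosen for finitely many elements. -/
lemma exists_notMem_forall_smul_mem {ι : Type*} [Fintype ι] {p : Ideal R} [hp : p.IsPrime]
    {U : Submodule R M} (m : ι → M) (h : ∀ j, ∃ s ∉ p, s • m j ∈ U) :
    ∃ s ∉ p, ∀ j, s • m j ∈ U := by
  classical
  choose s hs hsm using h
  refine ⟨∏ j, s j, fun hmem => ?_, fun j => ?_⟩
  · obtain ⟨j, _, hj⟩ := (hp.prod_mem_iff).1 hmem
    exact hs j hj
  · rw [← Finset.prod_erase_mul _ _ (Finset.mem_univ j), mul_smul]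
    exact U.smul_mem _ (hsm j)

lemma IsRegularModAt.exists_forall {p : Ideal R} [p.IsPrime] {U : Submodule R M} {x : R}
    (hx : IsRegularModAt p U x) (i : ℕ) (φ : Finset (Fin r) → M)
    (h : ∀ t, t.card = i → x • φ t ∈ U) :
    ∃ s ∉ p, ∀ t, t.card = i → s • φ t ∈ U := by
  obtain ⟨s, hs, hsφ⟩ := exists_notMem_forall_smul_mem (p := p) (U := U)
    (fun t : {t : Finset (Fin r) // t.card = i} => φ t.1) (fun t => hx _ (h _ t.2))
  exact ⟨s, hs, fun t ht => hsφ ⟨t, ht⟩⟩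

lemma exists_sub_smul_mem_of_mem_sup {U : Submodule R M} {x : R} {m : M}
    (h : m ∈ U ⊔ Ideal.span {x} • (⊤ : Submodule R M)) : ∃ c : M, m - x • c ∈ U := by
  obtain ⟨u, hu, v, hv, rfl⟩ := Submodule.mem_sup.1 h
  rw [Submodule.ideal_span_singleton_smul] at hv
  obtain ⟨c, -, rfl⟩ := hv
  exact ⟨c, by simpa using hu⟩

lemma mem_sup_of_sub_smul_mem {U : Submodule R M} {x : R} {m : M} (c : M)
    (h : m - x • c ∈ U) : m ∈ U ⊔ Ideal.span {x} • (⊤ : Submodule R M) := by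
  rw [← sub_add_cancel m (x • c)]
  exact Submodule.add_mem_sup h
    (Submodule.smul_mem_smul (Ideal.mem_span_singleton_self x) Submodule.mem_top)

lemma exists_cochain_sub_smul_mem {U : Submodule R M} {x : R} {i : ℕ}
    {φ : Finset (Fin r) → M}
    (h : ∀ t, t.card = i → φ t ∈ U ⊔ Ideal.span {x} • (⊤ : Submodule R M)) :
    ∃ χ : Finset (Fin r) → M, ∀ t, t.card = i → φ t - x • χ t ∈ U := by
  have h' : ∀ t : Finset (Fin r), ∃ c : M, t.card = i → φ t - x • c ∈ U := fun t => by
    by_cases ht : t.card = i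
    · obtain ⟨c, hc⟩ := exists_sub_smul_mem_of_mem_sup (h t ht)
      exact ⟨c, fun _ => hc⟩
    · exact ⟨0, fun h => absurd h ht⟩
  choose χ hχ using h'
  exact ⟨χ, hχ⟩

lemma KoszulVanishesBelow.succ_of_isRegularModAt {p : Ideal R} [hp : p.IsPrime]
    {U : Submodule R M} {x : R} (hxy : x ∈ Ideal.span (Set.range y))
    (hx : IsRegularModAt p U x) {n : ℕ}
    (h : KoszulVanishesBelow y p (U ⊔ Ideal.span {x} • (⊤ : Submodule R M)) n) :
    KoszulVanishesBelow y p U (n + 1) := by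
  intro i hi φ hφ
  obtain ⟨ψ, hψ⟩ := exists_smul_sub_koszulTotalDiff_mem y hxy U i φ hφ
  cases i with
  | zero =>
    obtain ⟨s, hs, hsφ⟩ := hx.exists_forall 0 φ fun t ht => by
      have := hψ t ht
      rwa [Finset.card_eq_zero.1 ht, koszulTotalDiff_apply, Finset.sum_empty, sub_zero,
        ← Finset.card_eq_zero.1 ht] at this
    exact ⟨s, hs, 0, fun t ht => by simpa using hsφ t ht⟩
  | succ i =>
    obtain ⟨a, ha, θ, hθ⟩ := h i (Nat.lt_of_succ_lt_succ hi) ψ fun t ht => by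
      refine mem_sup_of_sub_smul_mem (φ t) ?_
      rw [← neg_sub]
      exact U.neg_mem (hψ t ht)
    obtain ⟨χ, hχ⟩ := exists_cochain_sub_smul_mem
      (φ := a • ψ - koszulTotalDiff y M θ) hθ
    obtain ⟨s, hs, hsφ⟩ := hx.exists_forall (i + 1) (a • φ - koszulTotalDiff y M χ)
      fun t ht => by
        have h₁ := koszulTotalDiff_mem y (φ := a • ψ - koszulTotalDiff y M θ - x • χ) hχ t ht
        have h₂ := U.add_mem h₁ (U.smul_mem a (hψ t ht))
        convert h₂ using 1
        simp only [map_sub, map_smul, Pi.sub_apply, Pi.smul_apply, koszulTotalDiff_comp_self]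
        module
    refine ⟨s * a, fun hmem => (hp.mem_or_mem hmem).elim hs ha, s • χ, fun t ht => ?_⟩
    convert hsφ t ht using 1
    simp only [map_smul, Pi.sub_apply, Pi.smul_apply]
    module

lemma KoszulVanishesBelow.of_succ {p : Ideal R} [hp : p.IsPrime]
    {U : Submodule R M} {x : R} (hx : IsRegularModAt p U x) {n : ℕ}
    (h : KoszulVanishesBelow y p U (n + 1)) :
    KoszulVanishesBelow y p (U ⊔ Ideal.span {x} • (⊤ : Submodule R M)) n := by
  intro i hi φ hφ
  obtain ⟨χ, hχ⟩ := exists_cochain_sub_smul_mem hφ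
  obtain ⟨s, hs, hsχ⟩ := hx.exists_forall (i + 1 + 1) (koszulTotalDiff y M χ) fun t ht => by
    have h₁ := koszulTotalDiff_mem y (φ := koszulTotalDiff y M φ - x • χ) hχ t ht
    convert U.neg_mem h₁ using 1
    simp only [map_sub, map_smul, Pi.sub_apply, Pi.smul_apply, koszulTotalDiff_comp_self]
    module
  obtain ⟨a, ha, θ, hθ⟩ := h (i + 1) (Nat.succ_lt_succ hi) (s • χ) fun t ht => by
    simpa using hsχ t ht
  obtain ⟨b, hb, η, hη⟩ := h i (Nat.lt_succ_of_lt hi) ((a * s) • φ - x • θ) fun t ht => by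
    convert U.add_mem (U.smul_mem (a * s) (hχ t ht)) (U.smul_mem x (hθ t ht)) using 1
    simp only [map_sub, map_smul, Pi.sub_apply, Pi.smul_apply]
    module
  refine ⟨b * (a * s), fun hmem => ?_, η, fun t ht => ?_⟩
  · rcases hp.mem_or_mem hmem with hmem | hmem
    · exact hb hmem
    · exact (hp.mem_or_mem hmem).elim ha hs
  · refine mem_sup_of_sub_smul_mem (b • θ t) ?_
    convert hη t ht using 1
    simp only [Pi.sub_apply, Pi.smul_apply]
    module

/-- The elements of `R` killing `m` in the localization of `M ⧸ U` at `p`. -/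
def localAnnihilator (p : Ideal R) [hp : p.IsPrime] (U : Submodule R M) (m : M) : Ideal R where
  carrier := {c | ∃ s ∉ p, s • c • m ∈ U}
  zero_mem' := ⟨1, hp.one_notMem, by simp⟩
  add_mem' := by
    rintro c d ⟨s, hs, hsc⟩ ⟨s', hs', hsd⟩
    refine ⟨s * s', fun h => (hp.mem_or_mem h).elim hs hs', ?_⟩
    convert U.add_mem (U.smul_mem s' hsc) (U.smul_mem s hsd) using 1
    module
  smul_mem' := by
    rintro d c ⟨s, hs, hsc⟩
    refine ⟨s, hs, ?_⟩
    convert U.smul_mem d hsc using 1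
    rw [smul_eq_mul]
    module

lemma mem_localAnnihilator {p : Ideal R} [p.IsPrime] {U : Submodule R M} {m : M} {c : R} :
    c ∈ localAnnihilator p U m ↔ ∃ s ∉ p, s • c • m ∈ U := Iff.rfl

lemma mem_torsionOf_mk {U : Submodule R M} {m : M} {c : R} :
    c ∈ Ideal.torsionOf R (M ⧸ U) (Submodule.Quotient.mk m) ↔ c • m ∈ U := by
  rw [Ideal.mem_torsionOf_iff, ← Submodule.Quotient.mk_smul, Submodule.Quotient.mk_eq_zero]

lemma le_radical_localAnnihilator {p : Ideal R} [hp : p.IsPrime] {U : Submodule R M} {m : M}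
    (hpm : p ∈ (Ideal.torsionOf R (M ⧸ U) (Submodule.Quotient.mk m)).minimalPrimes) :
    p ≤ (localAnnihilator p U m).radical := by
  intro c hc
  by_cases hd : Disjoint (localAnnihilator p U m : Set R)
      (p.primeCompl ⊔ Submonoid.powers c : Submonoid R)
  · obtain ⟨q, hq, hle, hdisj⟩ := Ideal.exists_le_prime_disjoint _ _ hd
    have hqp : q ≤ p := fun d hdq => by
      by_contra hdp
      exact Set.disjoint_left.1 hdisj hdq (Submonoid.mem_sup_left (show d ∈ p.primeCompl from hdp))
    have hpq : p ≤ q := hpm.2 ⟨hq, fun d hd => hle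
      ⟨1, hp.one_notMem, by rw [one_smul]; exact mem_torsionOf_mk.1 hd⟩⟩ hqp
    exact absurd (Submonoid.mem_sup_right (Submonoid.mem_powers c))
      (Set.disjoint_left.1 hdisj (hpq hc))
  · obtain ⟨d, hd, hd'⟩ := Set.not_disjoint_iff.1 hd
    obtain ⟨s, hs, _, ⟨k, rfl⟩, rfl⟩ := Submonoid.mem_sup.1 hd'
    obtain ⟨s', hs', h⟩ := hd
    refine ⟨k, s' * s, fun h => (hp.mem_or_mem h).elim hs' hs, ?_⟩
    simpa only [mul_smul] using h

/-- If `(0 :_{M/U} 𝔞)` vanishes locally at a weakly associated prime `p` of `M ⧸ U`, then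
`𝔞` is not contained in `p`. -/
lemma not_span_le_of_koszulVanishesBelow {p : Ideal R} [hp : p.IsPrime] {U : Submodule R M}
    (hpU : p ∈ weakAssocPrimes R (M ⧸ U)) {n : ℕ} (h : KoszulVanishesBelow y p U (n + 1)) :
    ¬ Ideal.span (Set.range y) ≤ p := by
  classical
  intro hle
  obtain ⟨m', hm⟩ := hpU
  obtain ⟨m, rfl⟩ := Submodule.Quotient.mk_surjective U m'
  have hfg : (Ideal.span (Set.range y)).FG := Submodule.fg_span (Set.finite_range y)
  have hex := Ideal.exists_pow_le_of_le_radical_of_fg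
    (hle.trans (le_radical_localAnnihilator hm)) hfg
  have hone : ¬ (1 : R) ∈ localAnnihilator p U m := by
    rintro ⟨s, hs, hsm⟩
    exact hs (hm.1.2 (mem_torsionOf_mk.2 (by simpa using hsm)))
  obtain ⟨k, hk⟩ : ∃ k, Nat.find hex = k + 1 := Nat.exists_eq_succ_of_ne_zero fun h0 => by
    have := Nat.find_spec hex
    rw [h0, pow_zero, Ideal.one_eq_top] at this
    exact hone (this Submodule.mem_top)
  have hspec := Nat.find_spec hex
  rw [hk, pow_succ] at hspec
  refine Nat.find_min hex (m := k) (by omega) fun b hb => ?_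
  obtain ⟨s, hs, hsy⟩ := exists_notMem_forall_smul_mem (p := p) (U := U)
    (fun j => (b * y j) • m)
    (fun j => hspec (Ideal.mul_mem_mul hb (Ideal.subset_span ⟨j, rfl⟩)))
  obtain ⟨s', hs', ψ, hψ⟩ := h 0 n.succ_pos (fun _ => s • b • m) fun t _ => by
    refine U.sum_mem fun j _ => ?_
    convert U.smul_mem (koszulSign R t j) (hsy j) using 1
    module
  refine mem_localAnnihilator.2 ⟨s' * s, fun h => (hp.mem_or_mem h).elim hs' hs, ?_⟩
  have := hψ ∅ rfl
  rw [koszulTotalDiff_apply, Finset.sum_empty, sub_zero] at this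
  rwa [mul_smul]

/-- Existence of an element of `(y₁, …, y_r)` that is regular on `M ⧸ U` locally at every prime
of a generization-stable set `P`. -/
lemma exists_isRegularModAt {P : Set (Ideal R)} (hP : ∀ p ∈ P, p.IsPrime)
    (hgen : ∀ p ∈ P, ∀ q : Ideal R, q.IsPrime → q ≤ p → q ∈ P) {U : Submodule R M}
    (hU : (weakAssocPrimes R (M ⧸ U)).Finite) {n : ℕ}
    (h : ∀ p ∈ P, KoszulVanishesBelow y p U (n + 1)) :
    ∃ x ∈ Ideal.span (Set.range y), ∀ p ∈ P, IsRegularModAt p U x := by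
  classical
  have hfin := hU.subset (Set.inter_subset_left (t := P))
  have havoid : ¬ ((Ideal.span (Set.range y) : Ideal R) : Set R) ⊆
      ⋃ q ∈ (hfin.toFinset : Set (Ideal R)), (q : Set R) := by
    intro hsub
    obtain ⟨q, hq, hle⟩ := (Ideal.subset_union_prime (f := id) ⊥ ⊥ fun q hq _ _ =>
      hP q ((hfin.mem_toFinset).1 hq).2).1 hsub
    obtain ⟨hqU, hqP⟩ := (hfin.mem_toFinset).1 hq
    have := hP q hqP
    exact not_span_le_of_koszulVanishesBelow hqU (h q hqP) hle
  obtain ⟨x, hx, hxP⟩ := Set.not_subset.1 havoid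
  refine ⟨x, hx, fun p hp m hm => ?_⟩
  by_contra! hne
  have := hP p hp
  obtain ⟨q, hq, hqp⟩ := Ideal.exists_minimalPrimes_le
    (I := Ideal.torsionOf R (M ⧸ U) (Submodule.Quotient.mk m)) (J := p) fun c hc => by
      by_contra hcp
      exact hne c hcp (mem_torsionOf_mk.1 hc)
  refine hxP (Set.mem_biUnion (x := q) ?_ (hq.1.2 (mem_torsionOf_mk.2 hm)))
  exact (hfin.mem_toFinset).2 ⟨⟨_, hq⟩, hgen p hp q hq.1.1 hqp⟩

/-- `x` is a regular sequence on `M ⧸ U` locally at `p`. -/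
def IsRegularSeqModAt (p : Ideal R) (U : Submodule R M) {n : ℕ} (x : Fin n → R) : Prop :=
  ∀ i : Fin n, IsRegularModAt p
    (U ⊔ Ideal.span (x '' {j | j < i}) • (⊤ : Submodule R M)) (x i)

lemma sup_span_image_cons (U : Submodule R M) {n : ℕ} (x₀ : R) (x : Fin n → R) (i : Fin n) :
    U ⊔ Ideal.span ((Fin.cons x₀ x : Fin (n + 1) → R) '' {j | j < i.succ}) •
        (⊤ : Submodule R M) =
      U ⊔ Ideal.span {x₀} • (⊤ : Submodule R M) ⊔
        Ideal.span (x '' {j | j < i}) • (⊤ : Submodule R M) := by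
  have himage : (Fin.cons x₀ x : Fin (n + 1) → R) '' {j | j < i.succ} =
      insert x₀ (x '' {j | j < i}) := by
    ext c
    simp [Fin.exists_fin_succ, eq_comm]
  rw [himage, Ideal.span_insert, Submodule.sup_smul, sup_assoc]

lemma isRegularSeqModAt_cons {p : Ideal R} {U : Submodule R M} {n : ℕ} {x₀ : R}
    {x : Fin n → R} :
    IsRegularSeqModAt p U (Fin.cons x₀ x : Fin (n + 1) → R) ↔
      IsRegularModAt p U x₀ ∧
        IsRegularSeqModAt p (U ⊔ Ideal.span {x₀} • (⊤ : Submodule R M)) x := by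
  unfold IsRegularSeqModAt
  rw [Fin.forall_fin_succ]
  simp only [sup_span_image_cons, Fin.cons_succ, Fin.cons_zero]
  simp

lemma KoszulVanishesBelow.of_isRegularSeqModAt {p : Ideal R} [p.IsPrime] {n : ℕ}
    {U : Submodule R M} {x : Fin n → R} (hxy : ∀ i, x i ∈ Ideal.span (Set.range y))
    (hx : IsRegularSeqModAt p U x) : KoszulVanishesBelow y p U n := by
  induction n generalizing U with
  | zero => exact fun i hi => absurd hi (Nat.not_lt_zero i)
  | succ n ih =>
    rw [← Fin.cons_self_tail x, isRegularSeqModAt_cons] at hx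
    exact (ih (fun i => hxy i.succ) hx.2).succ_of_isRegularModAt (hxy 0) hx.1

lemma exists_isRegularSeqModAt {P : Set (Ideal R)} (hP : ∀ p ∈ P, p.IsPrime)
    (hgen : ∀ p ∈ P, ∀ q : Ideal R, q.IsPrime → q ≤ p → q ∈ P)
    (hM : IsWeaklyLaskerian R M) (n : ℕ) (U : Submodule R M)
    (h : ∀ p ∈ P, KoszulVanishesBelow y p U n) :
    ∃ x : Fin n → R, (∀ i, x i ∈ Ideal.span (Set.range y)) ∧
      ∀ p ∈ P, IsRegularSeqModAt p U x := by
  induction n generalizing U with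
  | zero => exact ⟨Fin.elim0, fun i => i.elim0, fun _ _ i => i.elim0⟩
  | succ n ih =>
    obtain ⟨x₀, hx₀, hreg⟩ := exists_isRegularModAt hP hgen (hM U) h
    obtain ⟨x, hx, hseq⟩ := ih (U ⊔ Ideal.span {x₀} • (⊤ : Submodule R M)) fun p hp =>
      have := hP p hp
      (h p hp).of_succ (hreg p hp)
    exact ⟨Fin.cons x₀ x, Fin.forall_fin_succ.2 ⟨hx₀, hx⟩,
      fun p hp => isRegularSeqModAt_cons.2 ⟨hreg p hp, hseq p hp⟩⟩

end Koszul

section TorsionTheory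

/-- The primes `p` with `R ⧸ p` not in `T`. -/
def nonTorsionPrimes (T : Set (ModuleCat.{u} R)) : Set (Ideal R) :=
  {p | p.IsPrime ∧ ModuleCat.of R (R ⧸ p) ∉ T}

variable {T : Set (ModuleCat.{u} R)}

lemma IsTorsionTheory.quotient_mem_of_le (hT : IsTorsionTheory R T) {I J : Ideal R}
    (hIJ : I ≤ J) (hI : ModuleCat.of R (R ⧸ I) ∈ T) : ModuleCat.of R (R ⧸ J) ∈ T :=
  hT.mem_of_iso (Submodule.quotientQuotientEquivQuotient I J hIJ).toModuleIso
    (hT.quotient_mem hI (Submodule.map I.mkQ J))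

lemma IsTorsionTheory.mem_nonTorsionPrimes_of_le (hT : IsTorsionTheory R T) {p q : Ideal R}
    (hp : p ∈ nonTorsionPrimes T) (hq : q.IsPrime) (hqp : q ≤ p) : q ∈ nonTorsionPrimes T :=
  ⟨hq, fun h => hp.2 (hT.quotient_mem_of_le hqp h)⟩

/-- Membership in a half centered torsion theory is detected by localizing at the primes `p`
with `R ⧸ p ∉ T`. -/
lemma IsTorsionTheory.mem_iff_of_isHalfCentered (hT : IsTorsionTheory R T)
    (hHC : IsHalfCentered T) (N : Type u) [AddCommGroup N] [Module R N] :
    ModuleCat.of R N ∈ T ↔ ∀ p ∈ nonTorsionPrimes T, ∀ n : N, ∃ s ∉ p, s • n = 0 := by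
  constructor
  · rintro hN p ⟨_, hpT⟩ n
    by_contra! hne
    refine hpT (hT.quotient_mem_of_le (I := Ideal.torsionOf R N n) (fun c hc => ?_) ?_)
    · by_contra hcp
      exact hne c hcp ((Ideal.mem_torsionOf_iff n c).1 hc)
    · exact hT.mem_of_iso (Ideal.quotTorsionOfEquivSpanSingleton R N n).symm.toModuleIso
        (hT.submodule_mem hN (R ∙ n))
  · intro h
    refine hHC _ fun p hp => ?_
    by_contra hpT
    obtain ⟨n, hn⟩ := Module.mem_support_iff'.1 hp
    obtain ⟨s, hs, hsn⟩ := h p.asIdeal ⟨p.2, hpT⟩ n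
    exact hn s hs hsn

variable {M : Type u} [AddCommGroup M] [Module R M]

lemma isWeakRegularSeqWrt_iff (hT : IsTorsionTheory R T) (hHC : IsHalfCentered T)
    {n : ℕ} (x : Fin n → R) :
    IsWeakRegularSeqWrt T x M ↔
      ∀ p ∈ nonTorsionPrimes T, IsRegularSeqModAt p (⊥ : Submodule R M) x := by
  have key : ∀ (U : Submodule R M) (c : R),
      ModuleCat.of R ↥(Submodule.map U.mkQ (Submodule.comap (LinearMap.lsmul R M c) U)) ∈ T ↔
        ∀ p ∈ nonTorsionPrimes T, IsRegularModAt p U c := by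
    intro U c
    rw [hT.mem_iff_of_isHalfCentered hHC]
    refine forall₂_congr fun p _ => ⟨fun h m hm => ?_, ?_⟩
    · obtain ⟨s, hs, hsm⟩ := h ⟨U.mkQ m, Submodule.mem_map_of_mem hm⟩
      refine ⟨s, hs, ?_⟩
      rw [← Submodule.Quotient.mk_eq_zero U]
      exact congrArg Subtype.val hsm
    · rintro h ⟨_, m, hm, rfl⟩
      obtain ⟨s, hs, hsm⟩ := h m hm
      exact ⟨s, hs, Subtype.ext ((Submodule.Quotient.mk_eq_zero U).2 hsm)⟩
  unfold IsWeakRegularSeqWrt IsRegularSeqModAt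
  simp only [key, bot_sup_eq]
  exact ⟨fun h p hp i => h i p hp, fun h i p hp => h p hp i⟩

variable {r : ℕ} (y : Fin r → R)

lemma koszulDiff_restrict (i : ℕ) (φ : Finset (Fin r) → M)
    (t : {s : Finset (Fin r) // s.card = i + 1}) :
    koszulDiff y M i (fun s => φ s.1) t = koszulTotalDiff y M φ t.1 :=
  Finset.sum_attach t.1 fun j => (koszulSign R t.1 j * y j) • φ (t.1.erase j)

lemma koszulDiffIn_restrict (i : ℕ) (φ : Finset (Fin r) → M)
    (t : {s : Finset (Fin r) // s.card = i}) :
    koszulDiffIn y M i (fun s => φ s.1) t = koszulTotalDiff y M φ t.1 :=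
  Finset.sum_attach t.1 fun j => (koszulSign R t.1 j * y j) • φ (t.1.erase j)

lemma exists_total_cochain (q : Finset (Fin r) → Prop) (φ : {s // q s} → M) :
    ∃ φ' : Finset (Fin r) → M, φ = fun s => φ' s.1 := by
  classical
  exact ⟨fun s => if h : q s then φ ⟨s, h⟩ else 0, by funext s; simp [s.2]⟩

lemma koszulCohomology_mem_iff (hT : IsTorsionTheory R T) (hHC : IsHalfCentered T) (i : ℕ) :
    ModuleCat.of R (koszulCohomology y M i) ∈ T ↔
      ∀ p ∈ nonTorsionPrimes T, ∀ φ : Finset (Fin r) → M,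
        (∀ t, t.card = i + 1 → koszulTotalDiff y M φ t ∈ (⊥ : Submodule R M)) →
        ∃ s ∉ p, ∃ ψ : Finset (Fin r) → M,
          ∀ t, t.card = i → s • φ t - koszulTotalDiff y M ψ t ∈ (⊥ : Submodule R M) := by
  rw [hT.mem_iff_of_isHalfCentered hHC]
  refine forall₂_congr fun p _ => ⟨fun h φ hφ => ?_, fun h n => ?_⟩
  · obtain ⟨s, hs, hsφ⟩ := h (Submodule.Quotient.mk ⟨fun s => φ s.1, by
      rw [LinearMap.mem_ker]
      funext t
      rw [koszulDiff_restrict]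
      exact hφ t.1 t.2⟩)
    rw [← Submodule.Quotient.mk_smul, Submodule.Quotient.mk_eq_zero] at hsφ
    obtain ⟨ψ', hψ⟩ := hsφ
    obtain ⟨ψ, rfl⟩ := exists_total_cochain _ ψ'
    refine ⟨s, hs, ψ, fun t ht => ?_⟩
    have := congrFun hψ ⟨t, ht⟩
    rw [koszulDiffIn_restrict] at this
    rw [Submodule.mem_bot, this]
    exact sub_self _
  · obtain ⟨⟨φ', hφ⟩, rfl⟩ := Submodule.Quotient.mk_surjective _ n
    obtain ⟨φ, rfl⟩ := exists_total_cochain _ φ'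
    obtain ⟨s, hs, ψ, hψ⟩ := h φ fun t ht => by
      rw [Submodule.mem_bot, ← koszulDiff_restrict y i φ ⟨t, ht⟩, LinearMap.mem_ker.1 hφ]
      rfl
    refine ⟨s, hs, ?_⟩
    rw [← Submodule.Quotient.mk_smul, Submodule.Quotient.mk_eq_zero]
    refine ⟨fun s => ψ s.1, ?_⟩
    funext t
    rw [koszulDiffIn_restrict]
    exact (sub_eq_zero.1 ((Submodule.mem_bot R).1 (hψ t.1 t.2))).symm

/-- Sequences of length `n` exist exactly when the Koszul cohomology below degree `n` is
torsion. -/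
lemma exists_isWeakRegularSeqWrt_iff (hT : IsTorsionTheory R T) (hHC : IsHalfCentered T)
    (hM : IsWeaklyLaskerian R M) (n : ℕ) :
    (∃ x : Fin n → R, (∀ i, x i ∈ Ideal.span (Set.range y)) ∧ IsWeakRegularSeqWrt T x M) ↔
      ∀ i < n, ModuleCat.of R (koszulCohomology y M i) ∈ T := by
  simp only [isWeakRegularSeqWrt_iff hT hHC, koszulCohomology_mem_iff y hT hHC]
  constructor
  · rintro ⟨x, hxy, hx⟩ i hi p hp
    have := hp.1
    exact KoszulVanishesBelow.of_isRegularSeqModAt hxy (hx p hp) i hi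
  · intro h
    exact exists_isRegularSeqModAt (fun p hp => hp.1)
      (fun p hp q hq hqp => hT.mem_nonTorsionPrimes_of_le hp hq hqp) hM n ⊥
      fun p hp i hi => h i hi p hp

end TorsionTheory

/-- **Theorem.** Let `𝔗` be a half centered torsion theory, `𝔞` a finitely generated ideal
of `R` (generated by `y₁, …, y_r`) and `M` a weakly Laskerian `R`-module. Then
`𝔗-cgrade_R(𝔞, M) = 𝔗-Kgrade_R(𝔞, M)`. -/
theorem tcgrade_eq_tKgrade_of_isHalfCentered (T : Set (ModuleCat.{u} R))
    (hT : IsTorsionTheory R T) (hHC : IsHalfCentered T)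
    (a : Ideal R) (M : Type u) [AddCommGroup M] [Module R M]
    (hM : IsWeaklyLaskerian R M)
    {r : ℕ} (y : Fin r → R) (hy : Ideal.span (Set.range y) = a) :
    Tcgrade T a M = TKgrade T y M := by
  subst hy
  apply le_antisymm
  · refine sSup_le ?_
    rintro _ ⟨n, hn, rfl⟩
    refine le_sInf ?_
    rintro _ ⟨i, hi, rfl⟩
    by_contra! hlt
    exact hi ((exists_isWeakRegularSeqWrt_iff y hT hHC hM n).1 hn i (by exact_mod_cast hlt))
  · refine ENat.forall_natCast_le_iff_le.1 fun n hn => ?_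
    refine le_sSup ⟨n, (exists_isWeakRegularSeqWrt_iff y hT hHC hM n).2 fun i hi => ?_, rfl⟩
    by_contra hmem
    have : (n : ℕ∞) ≤ i := hn.trans (sInf_le ⟨i, hmem, rfl⟩)
    exact absurd hi (not_lt.2 (by exact_mod_cast this))
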